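/- If X is an m×n totally positive real matrix, then every intermediate matrix X^{(i,j)} produced by Cauchon's Algorithm applied to X has all entries positive; in particular every pivot entry x^{(i,j)}_{ij} is nonzero, so the algorithm is well defined, and its output T = X^{(1,1)} is a positive matrix. -/

import Mathlib

/-!
Processing one pivot row `i` of Cauchon's Algorithm amounts to Neville elimination. If `w` is
the matrix before the first pivot of row `i`, the successive subtractions telescope: once a
pivot column to the right of `l` has been used, the entry `(k, l)` with `k < i` equals
`w k l - w i l * (w k j / w i j)`, where `j` is the last such column used
(`extendZero_cauchonSeq_row`). After the whole row, `j = l + 1`: above row `i`, each column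
but the last has had a multiple of its right neighbour in `w` subtracted, the multiple being
the one that would clear row `i`.

Full total positivity is not needed as an invariant: positivity of the minors with arbitrary
rows and consecutive columns suffices (`ColConsecPos`). It passes from the rows `≤ i` of `w` to
the rows `< i` of the result, since a minor of the latter is either a minor of `w` (when it
uses the last column) or, up to a positive factor, the minor of `w` obtained by adjoining
row `i` and the next column (`ColConsecPos.nevilleStep`).

Positivity of the `1 × 1` minors of the result says that the ratios `w k l / w i l` decrease
from one column to the next, hence from any column to any later one
(`ColConsecPos.ratio_lt`). By the formula above, all entries
then stay positive while row `i` is processed.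
-/

open Finset

/-- A real matrix is totally positive if every minor (determinant of a square submatrix
obtained by selecting rows and columns in increasing order) is positive. -/
def TotallyPositive {m n : ℕ} (A : Matrix (Fin m) (Fin n) ℝ) : Prop :=
  ∀ (r : ℕ) (f : Fin r → Fin m) (g : Fin r → Fin n),
    StrictMono f → StrictMono g → 0 < (A.submatrix f g).det

/-- A matrix is (strongly) positive if all of its entries are positive. -/
def EntrywisePos {m n : ℕ} (A : Matrix (Fin m) (Fin n) ℝ) : Prop :=
  ∀ i j, 0 < A i j

/-- The weight of the Γ-path encoded by the pair of finsets `(I, J)`.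
A Γ-path with Γ-turns `(i₁,j₁), …, (i_p,j_p)`, where `i₁ < i₂ < ⋯ < i_p` and
`j₁ > j₂ > ⋯ > j_p`, corresponds to the pair `I = {i₁,…,i_p}`, `J = {j₁,…,j_p}`;
the path runs from row vertex `i₁ = min I` to column vertex `j_p = min J`.
Its weight is `t_{i₁j₁} · ∏_{s=1}^{p−1} t_{i_{s+1} j_s}⁻¹ · t_{i_{s+1} j_{s+1}}`. -/
noncomputable def gammaWeight {m n : ℕ} (T : Matrix (Fin m) (Fin n) ℝ)
    (I : Finset (Fin m)) (J : Finset (Fin n)) : ℝ :=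
  if h : I.Nonempty ∧ J.Nonempty ∧ I.card = J.card then
    let p := I.card
    let row : ℕ → Fin m := fun s => (I.sort (· ≤ ·)).getD s (I.min' h.1)
    let col : ℕ → Fin n := fun s => (J.sort (· ≤ ·)).getD (p - 1 - s) (J.min' h.2.1)
    T (row 0) (col 0) *
      ∏ s ∈ Finset.range (p - 1),
        ((T (row (s + 1)) (col s))⁻¹ * T (row (s + 1)) (col (s + 1)))
  else 0

/-- The Γ-path-sum matrix `X_Γ(T)`: its `(i,j)` entry is the sum of the weights of all
Γ-paths from row vertex `i` to column vertex `j`. -/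
noncomputable def XGamma {m n : ℕ} (T : Matrix (Fin m) (Fin n) ℝ) :
    Matrix (Fin m) (Fin n) ℝ :=
  Matrix.of fun i j =>
    ∑ I ∈ Finset.univ.filter (fun I : Finset (Fin m) => I.min = (i : WithTop (Fin m))),
      ∑ J ∈ Finset.univ.filter (fun J : Finset (Fin n) =>
          J.min = (j : WithTop (Fin n)) ∧ J.card = I.card),
        gammaWeight T I J

/-- The weight of the L-path encoded by the pair of finsets `(I, J)`.
An L-path with turns `(i₁,j₁), …, (i_p,j_p)`, where `i₁ > i₂ > ⋯ > i_p` and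
`j₁ < j₂ < ⋯ < j_p`, corresponds to `I = {i₁,…,i_p}`, `J = {j₁,…,j_p}`;
the path runs from row vertex `i₁ = max I` to column vertex `j_p = max J`. -/
noncomputable def lWeight {m n : ℕ} (T : Matrix (Fin m) (Fin n) ℝ)
    (I : Finset (Fin m)) (J : Finset (Fin n)) : ℝ :=
  if h : I.Nonempty ∧ J.Nonempty ∧ I.card = J.card then
    let p := I.card
    let row : ℕ → Fin m := fun s => (I.sort (· ≤ ·)).getD (p - 1 - s) (I.min' h.1)
    let col : ℕ → Fin n := fun s => (J.sort (· ≤ ·)).getD s (J.min' h.2.1)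
    T (row 0) (col 0) *
      ∏ s ∈ Finset.range (p - 1),
        ((T (row (s + 1)) (col s))⁻¹ * T (row (s + 1)) (col (s + 1)))
  else 0

/-- The L-path-sum matrix `X_L(T)`. -/
noncomputable def XL {m n : ℕ} (T : Matrix (Fin m) (Fin n) ℝ) :
    Matrix (Fin m) (Fin n) ℝ :=
  Matrix.of fun i j =>
    ∑ I ∈ Finset.univ.filter (fun I : Finset (Fin m) => I.max = (i : WithBot (Fin m))),
      ∑ J ∈ Finset.univ.filter (fun J : Finset (Fin n) =>
          J.max = (j : WithBot (Fin n)) ∧ J.card = I.card),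
        lWeight T I J

/-- The set of internal vertices traversed by the Γ-path encoded by `(I, J)`:
horizontal segments `{(i_s, b) : j_s ≤ b ≤ j_{s-1}}` (with `j₀` interpreted as the last
column) and vertical segments `{(a, j_s) : i_s ≤ a ≤ i_{s+1}}` (with `i_{p+1}` interpreted
as the last row). -/
def pathVerts {m n : ℕ} (I : Finset (Fin m)) (J : Finset (Fin n)) :
    Finset (Fin m × Fin n) :=
  Finset.univ.filter fun v =>
    (∃ s ∈ Finset.range I.card,
        v.1 = (I.sort (· ≤ ·)).getD s v.1 ∧
        (J.sort (· ≤ ·)).getD (J.card - 1 - s) v.2 ≤ v.2 ∧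
        (s = 0 ∨ v.2 ≤ (J.sort (· ≤ ·)).getD (J.card - s) v.2)) ∨
    (∃ s ∈ Finset.range I.card,
        v.2 = (J.sort (· ≤ ·)).getD (J.card - 1 - s) v.2 ∧
        (I.sort (· ≤ ·)).getD s v.1 ≤ v.1 ∧
        (s + 1 = I.card ∨ v.1 ≤ (I.sort (· ≤ ·)).getD (s + 1) v.1))

/-- The sequence of matrices produced by Cauchon's Algorithm: `cauchonSeq X t` is the
matrix obtained after performing the first `t` steps, the steps being indexed by the
positions `(i,j) ∈ [m]×[n]` (1-based) in increasing reverse lexicographic order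
(`(m,n)` first); the step at 1-based position `(i,j)` is performed on `cauchonSeq X t`
with `t = (m−i)·n + (n−j)`, so that the matrix `X^{(i,j)}` of Cauchon's Algorithm is
`cauchonSeq X ((m−i)·n + (n−j))`. -/
noncomputable def cauchonSeq {m n : ℕ} (X : Matrix (Fin m) (Fin n) ℝ) :
    ℕ → Matrix (Fin m) (Fin n) ℝ
  | 0 => X
  | t + 1 =>
    let Y := cauchonSeq X t
    Matrix.of fun k l =>
      let i0 : Fin m := ⟨m - 1 - t / n,
        lt_of_le_of_lt (Nat.sub_le _ _) (by have := k.isLt; omega)⟩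
      let j0 : Fin n := ⟨n - 1 - t % n,
        lt_of_le_of_lt (Nat.sub_le _ _) (by have := l.isLt; omega)⟩
      if (k : ℕ) < (i0 : ℕ) ∧ (l : ℕ) < (j0 : ℕ) then
        Y k l - Y k j0 * (Y i0 j0)⁻¹ * Y i0 l
      else Y k l

/-- The output `T = X^{(1,1)}` of Cauchon's Algorithm. -/
noncomputable def cauchonOutput {m n : ℕ} (X : Matrix (Fin m) (Fin n) ℝ) :
    Matrix (Fin m) (Fin n) ℝ :=
  cauchonSeq X ((m - 1) * n + (n - 1))

/-- `contigMinorTL A i j` (1-based `i`, `j`) is the minor `det A[{i⋯},{j⋯}]` of the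
largest contiguous submatrix of `A` with top-left corner `(i,j)`, i.e. with rows
`i, …, i+k` and columns `j, …, j+k` where `k = min(M−i, N−j)`; it is `1` (the empty
determinant) if `(i,j)` is out of range. -/
noncomputable def contigMinorTL {M N : ℕ} (A : Matrix (Fin M) (Fin N) ℝ) (i j : ℕ) : ℝ :=
  if h : 1 ≤ i ∧ i ≤ M ∧ 1 ≤ j ∧ j ≤ N then
    (A.submatrix
      (fun s : Fin (min (M - i) (N - j) + 1) =>
        (⟨i - 1 + (s : ℕ), by have := s.isLt; omega⟩ : Fin M))
      (fun s : Fin (min (M - i) (N - j) + 1) =>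
        (⟨j - 1 + (s : ℕ), by have := s.isLt; omega⟩ : Fin N))).det
  else 1

/-- `borderMinorTL A i₀ j₀ i j` (1-based indices, `i₀ < i`, `j₀ < j`) is the minor
`det A[{i₀, i⋯},{j₀, j⋯}]` with rows `{i₀} ∪ {i, …, i+k}` and columns
`{j₀} ∪ {j, …, j+k}` where `k = min(M−i, N−j)`; when the contiguous part is out of range
(`i > M` or `j > N`) it is the single entry `A[{i₀},{j₀}]`, and it is `1` if `(i₀,j₀)`
is out of range. -/
noncomputable def borderMinorTL {M N : ℕ} (A : Matrix (Fin M) (Fin N) ℝ)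
    (i₀ j₀ i j : ℕ) : ℝ :=
  if h : 1 ≤ i₀ ∧ i₀ ≤ M ∧ 1 ≤ j₀ ∧ j₀ ≤ N then
    if h2 : i₀ < i ∧ i ≤ M ∧ j₀ < j ∧ j ≤ N then
      (A.submatrix
        (fun s : Fin (min (M - i) (N - j) + 2) =>
          if (s : ℕ) = 0 then (⟨i₀ - 1, by omega⟩ : Fin M)
          else ⟨i - 1 + ((s : ℕ) - 1), by have := s.isLt; omega⟩)
        (fun s : Fin (min (M - i) (N - j) + 2) =>
          if (s : ℕ) = 0 then (⟨j₀ - 1, by omega⟩ : Fin N)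
          else ⟨j - 1 + ((s : ℕ) - 1), by have := s.isLt; omega⟩)).det
    else A ⟨i₀ - 1, by omega⟩ ⟨j₀ - 1, by omega⟩
  else 1

/-- `borderMinorBR A i j i₀ j₀` (1-based indices, `i < i₀`, `j < j₀`) is the minor
`det A[{⋯i, i₀},{⋯j, j₀}]` with rows `{i−k, …, i} ∪ {i₀}` and columns
`{j−k, …, j} ∪ {j₀}` where `k = min(i−1, j−1)`; when the contiguous part is empty
(`i = 0` or `j = 0`) it is the single entry `A[{i₀},{j₀}]`, and it is `1` if `(i₀,j₀)`
is out of range. -/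
noncomputable def borderMinorBR {M N : ℕ} (A : Matrix (Fin M) (Fin N) ℝ)
    (i j i₀ j₀ : ℕ) : ℝ :=
  if h : 1 ≤ i₀ ∧ i₀ ≤ M ∧ 1 ≤ j₀ ∧ j₀ ≤ N then
    if h2 : 1 ≤ i ∧ i < i₀ ∧ 1 ≤ j ∧ j < j₀ then
      (A.submatrix
        (fun s : Fin (min (i - 1) (j - 1) + 2) =>
          if (s : ℕ) = min (i - 1) (j - 1) + 1 then (⟨i₀ - 1, by omega⟩ : Fin M)
          else ⟨i - 1 - min (i - 1) (j - 1) + (s : ℕ), by have := s.isLt; omega⟩)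
        (fun s : Fin (min (i - 1) (j - 1) + 2) =>
          if (s : ℕ) = min (i - 1) (j - 1) + 1 then (⟨j₀ - 1, by omega⟩ : Fin N)
          else ⟨j - 1 - min (i - 1) (j - 1) + (s : ℕ), by have := s.isLt; omega⟩)).det
    else A ⟨i₀ - 1, by omega⟩ ⟨j₀ - 1, by omega⟩
  else 1

/-! ### Neville elimination and minors with consecutive columns -/

/-- Every minor of the leading `M × N` block of `x` with arbitrary rows and *consecutive*
columns is positive. Infinite arrays `ℕ → ℕ → ℝ` are used, of which only the leading block
matters, so that shifting column indices needs no bound proofs. -/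
def ColConsecPos (x : ℕ → ℕ → ℝ) (M N : ℕ) : Prop :=
  ∀ (r : ℕ) (f : Fin r → ℕ) (c : ℕ), StrictMono f → (∀ s, f s < M) → c + r ≤ N →
    0 < (Matrix.of fun s t : Fin r => x (f s) (c + (t : ℕ))).det

/-- One step of Neville elimination on the columns of `x`: the entries of row `i` are
cleared, except the last, by subtracting from each column but the last a multiple of its
(unmodified) right neighbour. -/
noncomputable def nevilleStep (x : ℕ → ℕ → ℝ) (i N : ℕ) (k l : ℕ) : ℝ :=
  if l + 1 < N then x k l - x i l * (x k (l + 1) / x i (l + 1)) else x k l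

/-- The extension of a finite matrix by zeros to an infinite array. -/
def extendZero {m n : ℕ} (A : Matrix (Fin m) (Fin n) ℝ) (k l : ℕ) : ℝ :=
  if h : k < m ∧ l < n then A ⟨k, h.1⟩ ⟨l, h.2⟩ else 0

lemma ColConsecPos.entry_pos {x : ℕ → ℕ → ℝ} {M N : ℕ} (hx : ColConsecPos x M N)
    {k l : ℕ} (hk : k < M) (hl : l < N) : 0 < x k l := by
  have h := hx 1 (fun _ => k) l (Subsingleton.strictMono _) (fun _ => hk) (by omega)
  simpa using h

lemma det_eq_of_forall_col_eq_sub_succ {r : ℕ}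
    (A B : Matrix (Fin (r + 1)) (Fin (r + 1)) ℝ) (d : Fin r → ℝ)
    (hlast : ∀ i, B i (Fin.last r) = A i (Fin.last r))
    (hsub : ∀ i (j : Fin r), B i j.castSucc = A i j.castSucc - d j * A i j.succ) :
    A.det = B.det := by
  rw [← Matrix.det_submatrix_equiv_self Fin.revPerm A,
    ← Matrix.det_submatrix_equiv_self Fin.revPerm B]
  refine Matrix.det_eq_of_forall_col_eq_smul_add_pred (fun j => d j.rev) ?_ ?_
  · intro i
    simp [hlast]
  · intro i j
    simp [hsub, Fin.rev_succ, Fin.rev_castSucc]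

/-- The minors of the Neville step on consecutive columns not reaching the last one are,
up to division by the positive corner entry, the minors of `x` with the cleared row and the
next column adjoined; those reaching the last column are minors of `x`. -/
lemma ColConsecPos.nevilleStep {x : ℕ → ℕ → ℝ} {M N : ℕ} (hx : ColConsecPos x (M + 1) N) :
    ColConsecPos (nevilleStep x M N) M N := by
  intro r f c hf hfM hc
  rcases Nat.lt_or_ge (c + r) N with hlt | hge
  · have hmono : StrictMono (Fin.snoc f M : Fin (r + 1) → ℕ) := by
      intro a b hab
      induction b using Fin.lastCases with
      | last =>
        induction a using Fin.lastCases with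
        | last => exact absurd hab (lt_irrefl _)
        | cast a => simpa using hfM a
      | cast b =>
        induction a using Fin.lastCases with
        | last => exact absurd hab (not_lt.2 (Fin.le_last _))
        | cast a => simpa using hf (by simpa using hab)
    have hpos := hx (r + 1) (Fin.snoc f M) c hmono
      (by
        intro s
        induction s using Fin.lastCases with
        | last => simp
        | cast s => simpa using (hfM s).trans (Nat.lt_succ_self M))
      (by omega)
    have hcorner : 0 < x M (c + r) := hx.entry_pos (Nat.lt_succ_self M) hlt
    set F : Fin (r + 1) → ℕ := Fin.snoc f M with hF
    -- The extra row of `B` vanishes off the corner, so `B.det` is `x M (c + r)` times the minor.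
    let B : Matrix (Fin (r + 1)) (Fin (r + 1)) ℝ := Matrix.of fun s t =>
      if (t : ℕ) < r then _root_.nevilleStep x M N (F s) (c + t) else x (F s) (c + t)
    rw [det_eq_of_forall_col_eq_sub_succ _ B
      (fun j => x M (c + j) / x M (c + j + 1)) (by intro i; simp [B])
      (by
        intro i j
        have : c + (j : ℕ) + 1 < N := by have := j.isLt; omega
        simp only [B, Matrix.of_apply, Fin.val_castSucc, Fin.val_succ, j.isLt, if_true,
          _root_.nevilleStep, this, ← add_assoc]
        ring)] at hpos
    rw [Matrix.det_succ_row B (Fin.last r), Fin.sum_univ_castSucc,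
      Finset.sum_eq_zero, zero_add] at hpos
    · have hB : B (Fin.last r) (Fin.last r) = x M (c + r) := by simp [B, hF]
      have hsub : B.submatrix (Fin.last r).succAbove (Fin.last r).succAbove =
          Matrix.of fun s t : Fin r => _root_.nevilleStep x M N (f s) (c + (t : ℕ)) := by
        ext s t
        simp [B, hF, Fin.succAbove_last]
      rw [hB, hsub, ← two_mul, pow_mul, neg_one_sq, one_pow, one_mul] at hpos
      exact (mul_pos_iff_of_pos_left hcorner).1 hpos
    · intro j _
      have h1 : c + (j : ℕ) + 1 < N := by have := j.isLt; omega
      have h2 : x M (c + j + 1) ≠ 0 := (hx.entry_pos (Nat.lt_succ_self M) h1).ne'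
      have : B (Fin.last r) j.castSucc = 0 := by
        simp only [B, Matrix.of_apply, Fin.val_castSucc, j.isLt, if_true,
          _root_.nevilleStep, h1, hF, Fin.snoc_last]
        field_simp
        ring
      rw [this]
      ring
  · have hpos := hx r f c hf (fun s => (hfM s).trans (Nat.lt_succ_self M)) hc
    cases r with
    | zero => simp
    | succ r =>
      rw [det_eq_of_forall_col_eq_sub_succ _
        (Matrix.of fun s t : Fin (r + 1) => _root_.nevilleStep x M N (f s) (c + (t : ℕ)))
        (fun j => x M (c + j) / x M (c + j + 1))
        (by
          intro i
          have : ¬ (c + r + 1 < N) := by omega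
          simp [_root_.nevilleStep, this])
        (by
          intro i j
          have : c + (j : ℕ) + 1 < N := by have := j.isLt; omega
          simp only [Matrix.of_apply, Fin.val_castSucc, Fin.val_succ,
            _root_.nevilleStep, this, if_true, ← add_assoc]
          ring)] at hpos
      exact hpos

/-- The ratios of the entries of row `k` to those of a lower row `M` strictly decrease from
left to right: neighbouring ratios differ by a positive entry of the Neville step. -/
lemma ColConsecPos.ratio_lt {x : ℕ → ℕ → ℝ} {M N : ℕ} (hx : ColConsecPos x (M + 1) N)
    {k l j : ℕ} (hk : k < M) (hlj : l < j) (hj : j < N) :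
    x k j / x M j < x k l / x M l := by
  induction j, hlj using Nat.le_induction with
  | base =>
    have h := hx.nevilleStep.entry_pos hk (show l < N by omega)
    rw [_root_.nevilleStep, if_pos hj] at h
    rw [lt_div_iff₀ (hx.entry_pos (Nat.lt_succ_self M) (by omega))]
    linarith
  | succ j hlj ih =>
    refine lt_trans ?_ (ih (by omega))
    have h := hx.nevilleStep.entry_pos hk (show j < N by omega)
    rw [_root_.nevilleStep, if_pos hj] at h
    rw [lt_div_iff₀ (hx.entry_pos (Nat.lt_succ_self M) (by omega))]
    linarith

/-! ### Cauchon's Algorithm row by row -/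

lemma TotallyPositive.colConsecPos {m n : ℕ} {X : Matrix (Fin m) (Fin n) ℝ}
    (hX : TotallyPositive X) : ColConsecPos (extendZero X) m n := by
  intro r f c hf hfm hc
  convert hX r (fun s => ⟨f s, hfm s⟩)
    (fun t => ⟨c + (t : ℕ), by have := t.isLt; omega⟩) (fun a b h => hf h)
    (fun a b h => by simpa using h) using 2
  ext s t
  have : c + (t : ℕ) < n := by have := t.isLt; omega
  simp [extendZero, hfm s, this]

/-- A single step of Cauchon's Algorithm, at the pivot with 0-based position
`(m - 1 - q, n - 1 - s)`. -/
lemma extendZero_cauchonSeq_succ {m n : ℕ} (X : Matrix (Fin m) (Fin n) ℝ) {q s k l : ℕ}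
    (hs : s < n) (hk : k < m) (hl : l < n) :
    extendZero (cauchonSeq X (q * n + (s + 1))) k l =
      let y := extendZero (cauchonSeq X (q * n + s))
      if k < m - 1 - q ∧ l < n - 1 - s then
        y k l - y k (n - 1 - s) * (y (m - 1 - q) (n - 1 - s))⁻¹ * y (m - 1 - q) l
      else y k l := by
  have hdiv : (q * n + s) / n = q := by
    rw [mul_comm, Nat.mul_add_div (by omega), Nat.div_eq_of_lt hs, add_zero]
  have hmod : (q * n + s) % n = s := by
    rw [mul_comm, Nat.mul_add_mod, Nat.mod_eq_of_lt hs]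
  have h1 : m - 1 - q < m := by omega
  have h2 : n - 1 - s < n := by omega
  rw [← add_assoc]
  simp [extendZero, cauchonSeq, hdiv, hmod, hk, hl, h1, h2]

/-- The matrix after `s` of the `n` steps with pivot row `i = m - 1 - q`, in terms of the
matrix `w` before the first of them. Above the pivot row, entry `(k, l)` has been reduced so
far against column `j = max (l + 1) (n - s)` only, where `j = n` means that it has not been
touched: the successive subtractions telescope. -/
lemma extendZero_cauchonSeq_row {m n : ℕ} (X : Matrix (Fin m) (Fin n) ℝ) {q s : ℕ}
    (hq : q < m) (hs : s ≤ n)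
    (hne : ∀ l < n, extendZero (cauchonSeq X (q * n)) (m - 1 - q) l ≠ 0) :
    ∀ k < m, ∀ l < n, extendZero (cauchonSeq X (q * n + s)) k l =
      let w := extendZero (cauchonSeq X (q * n))
      if k < m - 1 - q then
        w k l - w (m - 1 - q) l *
          (if max (l + 1) (n - s) < n then
            w k (max (l + 1) (n - s)) / w (m - 1 - q) (max (l + 1) (n - s)) else 0)
      else w k l := by
  induction s with
  | zero =>
    intro k hk l hl
    simp
  | succ s ih =>
    have ih := ih (by omega)
    intro k hk l hl
    rw [extendZero_cauchonSeq_succ X (by omega) hk hl]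
    simp only
    rw [ih k hk l hl, ih k hk (n - 1 - s) (by omega), ih (m - 1 - q) (by omega) l hl,
      ih (m - 1 - q) (by omega) (n - 1 - s) (by omega)]
    by_cases hki : k < m - 1 - q
    · simp only [hki, if_true, true_and, lt_irrefl, if_false]
      by_cases hlj : l < n - 1 - s
      · have e1 : max (l + 1) (n - s) = n - s := by omega
        have e2 : max (n - 1 - s + 1) (n - s) = n - s := by omega
        have e3 : max (l + 1) (n - (s + 1)) = n - 1 - s := by omega
        have e4 : n - 1 - s < n := by omega
        have := hne _ e4
        rw [if_pos hlj, e1, e2, e3, if_pos e4]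
        field_simp
        ring
      · have e1 : max (l + 1) (n - s) = max (l + 1) (n - (s + 1)) := by omega
        rw [if_neg hlj, e1]
    · simp [hki]

/-- The invariant at the start of each pivot row: the rows not yet used as pivot rows form
an array with positive column-consecutive minors, and every entry is positive. -/
lemma cauchonSeq_row_invariant {m n : ℕ} {X : Matrix (Fin m) (Fin n) ℝ}
    (hX : TotallyPositive X) {q : ℕ} (hq : q < m) :
    ColConsecPos (extendZero (cauchonSeq X (q * n))) (m - 1 - q + 1) n ∧
      ∀ s ≤ n, ∀ k < m, ∀ l < n, 0 < extendZero (cauchonSeq X (q * n + s)) k l := by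
  -- Entrywise positivity throughout a pivot row follows from the state at its start.
  have key : ∀ q < m, ColConsecPos (extendZero (cauchonSeq X (q * n))) (m - 1 - q + 1) n →
      (∀ k < m, ∀ l < n, 0 < extendZero (cauchonSeq X (q * n)) k l) →
      ∀ s ≤ n, ∀ k < m, ∀ l < n, 0 < extendZero (cauchonSeq X (q * n + s)) k l := by
    intro q hq hc hp s hs k hk l hl
    rw [extendZero_cauchonSeq_row X hq hs (fun l hl => (hp _ (by omega) l hl).ne') k hk l hl]
    simp only
    split_ifs with h1 h2
    · have hr := hc.ratio_lt h1 (show l < max (l + 1) (n - s) by omega) h2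
      rw [lt_div_iff₀ (hp _ (by omega) l hl)] at hr
      linarith
    · simpa using hp k hk l hl
    · exact hp k hk l hl
  induction q with
  | zero =>
    have h0 : ColConsecPos (extendZero (cauchonSeq X (0 * n))) m n := by
      simpa [cauchonSeq] using hX.colConsecPos
    have hm : m - 1 - 0 + 1 = m := by omega
    have h1 : ColConsecPos (extendZero (cauchonSeq X (0 * n))) (m - 1 - 0 + 1) n := by
      rwa [hm]
    exact ⟨h1, key 0 hq h1 fun k hk l hl => h0.entry_pos hk hl⟩
  | succ q ih =>
    obtain ⟨hc, hp⟩ := ih (by omega)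
    have hp0 := hp 0 (Nat.zero_le n)
    have hpn := hp n le_rfl
    have hqn : q * n + n = (q + 1) * n := by ring
    have hc' : ColConsecPos (extendZero (cauchonSeq X ((q + 1) * n)))
        (m - 1 - (q + 1) + 1) n := by
      intro r f c hf hfM hcr
      have hM : m - 1 - (q + 1) + 1 = m - 1 - q := by omega
      rw [hM] at hfM
      convert hc.nevilleStep r f c hf hfM hcr using 2
      ext a b
      have hb : c + (b : ℕ) < n := by have := b.isLt; omega
      have ha := hfM a
      have hmax : max (c + (b : ℕ) + 1) (n - n) = c + b + 1 := by omega
      simp only [Matrix.of_apply]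
      rw [← hqn, extendZero_cauchonSeq_row X (by omega) le_rfl
        (fun l hl => (hp0 _ (by omega) l hl).ne') _ (by omega) _ hb]
      simp only [ha, if_true, hmax, nevilleStep]
      split_ifs <;> simp
    exact ⟨hc', key (q + 1) hq hc' (by rwa [hqn] at hpn)⟩

/-- every intermediate matrix `X^{(i,j)}` of Cauchon's Algorithm applied to
a totally positive matrix is entrywise positive; in particular every pivot entry is
nonzero and the output is a positive matrix.  (Here `X^{(i,j)}` for 1-based `(i,j)` is
`cauchonSeq X ((m−i)·n + (n−j))`, written below with 0-based `i j : Fin m × Fin n`.) -/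
theorem cauchon_intermediate_positive {m n : ℕ} (X : Matrix (Fin m) (Fin n) ℝ)
    (hX : TotallyPositive X) :
    (∀ (i : Fin m) (j : Fin n) (k : Fin m) (l : Fin n),
        0 < cauchonSeq X ((m - 1 - (i : ℕ)) * n + (n - 1 - (j : ℕ))) k l) ∧
    (∀ (i : Fin m) (j : Fin n),
        cauchonSeq X ((m - 1 - (i : ℕ)) * n + (n - 1 - (j : ℕ))) i j ≠ 0) ∧
    EntrywisePos (cauchonOutput X) := by
  have main : ∀ (i : Fin m) (j : Fin n) (k : Fin m) (l : Fin n),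
      0 < cauchonSeq X ((m - 1 - (i : ℕ)) * n + (n - 1 - (j : ℕ))) k l := by
    intro i j k l
    have h := (cauchonSeq_row_invariant hX (q := m - 1 - (i : ℕ))
      (by have := i.isLt; omega)).2 (n - 1 - (j : ℕ)) (by omega) k k.isLt l l.isLt
    simpa [extendZero] using h
  refine ⟨main, fun i j => (main i j i j).ne', fun k l => ?_⟩
  -- The output is the intermediate matrix at the top-left position, 0-based `(0, 0)`.
  exact main ⟨0, k.pos⟩ ⟨0, l.pos⟩ k l
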